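/- In the calculus λ_S, a doubled reset is applicatively bisimilar to a single reset: for every closed term t, ⟨⟨t⟩⟩ ≈_app ⟨t⟩. -/

import Mathlib

namespace LambdaS

/-- Terms of the calculus λ_S: variables, λ-abstractions, applications,
the shift operator `S k.t`, and the reset delimiter `⟨t⟩`. -/
inductive Tm : Type
  | var : ℕ → Tm
  | lam : ℕ → Tm → Tm
  | app : Tm → Tm → Tm
  | shift : ℕ → Tm → Tm
  | reset : Tm → Tm
  deriving DecidableEq

/-- A variable fresh for a finite set of variables. -/
def fresh (s : Finset ℕ) : ℕ := if h : s.Nonempty then s.max' h + 1 else 0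

namespace Tm

/-- Free variables. -/
def fv : Tm → Finset ℕ
  | var x => {x}
  | lam x t => fv t \ {x}
  | app t u => fv t ∪ fv u
  | shift k t => fv t \ {k}
  | reset t => fv t

def size : Tm → ℕ
  | var _ => 1
  | lam _ t => size t + 1
  | app t u => size t + size u + 1
  | shift _ t => size t + 1
  | reset t => size t + 1

/-- Renaming of free occurrences of a variable (used for α-renaming with a
fresh target variable). -/
def rename : Tm → ℕ → ℕ → Tm
  | var w, y, z => if w = y then var z else var w
  | lam w t, y, z => if w = y then lam w t else lam w (rename t y z)
  | app t u, y, z => app (rename t y z) (rename u y z)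
  | shift w t, y, z => if w = y then shift w t else shift w (rename t y z)
  | reset t, y, z => reset (rename t y z)

theorem size_rename (t : Tm) (y z : ℕ) : size (rename t y z) = size t := by
  induction t generalizing y z with
  | var w => simp only [rename]; split <;> rfl
  | lam w t ih => simp only [rename]; split <;> simp [size, ih]
  | app t u iht ihu => simp [rename, size, iht, ihu]
  | shift w t ih => simp only [rename]; split <;> simp [size, ih]
  | reset t ih => simp [rename, size, ih]

/-- Capture-avoiding substitution `t{v/x}` of `v` for the free occurrences of
`x` in `t`; bound variables are α-renamed when needed. -/
def subst : Tm → ℕ → Tm → Tm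
  | var w, x, v => if w = x then v else var w
  | lam y t, x, v =>
      if y = x then lam y t
      else if y ∈ fv v then
        lam (fresh (fv v ∪ fv t ∪ {x}))
          (subst (rename t y (fresh (fv v ∪ fv t ∪ {x}))) x v)
      else lam y (subst t x v)
  | app t u, x, v => app (subst t x v) (subst u x v)
  | shift y t, x, v =>
      if y = x then shift y t
      else if y ∈ fv v then
        shift (fresh (fv v ∪ fv t ∪ {x}))
          (subst (rename t y (fresh (fv v ∪ fv t ∪ {x}))) x v)
      else shift y (subst t x v)
  | reset t, x, v => reset (subst t x v)
termination_by t _ _ => size t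
decreasing_by all_goals simp [size_rename, size] <;> omega

end Tm

/-- Values: variables and λ-abstractions. -/
inductive IsValue : Tm → Prop
  | var (x : ℕ) : IsValue (Tm.var x)
  | lam (x : ℕ) (t : Tm) : IsValue (Tm.lam x t)

/-- A term is closed if it has no free variables. -/
def Closed (t : Tm) : Prop := t.fv = ∅

/-- Pure evaluation contexts E ::= □ | v E | E t. -/
inductive ECtx : Type
  | hole : ECtx
  | appR : (v : Tm) → IsValue v → ECtx → ECtx
  | appL : ECtx → Tm → ECtx

def ECtx.plug : ECtx → Tm → Tm
  | .hole, t => t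
  | .appR v _ E, t => Tm.app v (E.plug t)
  | .appL E u, t => Tm.app (E.plug t) u

def ECtx.fv : ECtx → Finset ℕ
  | .hole => ∅
  | .appR v _ E => v.fv ∪ E.fv
  | .appL E u => E.fv ∪ u.fv

/-- Composition of pure contexts: `(E.comp E').plug t = E.plug (E'.plug t)`. -/
def ECtx.comp : ECtx → ECtx → ECtx
  | .hole, E' => E'
  | .appR v hv E, E' => .appR v hv (E.comp E')
  | .appL E u, E' => .appL (E.comp E') u

/-- Evaluation contexts F ::= □ | v F | F t | ⟨F⟩. -/
inductive FCtx : Type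
  | hole : FCtx
  | appR : (v : Tm) → IsValue v → FCtx → FCtx
  | appL : FCtx → Tm → FCtx
  | reset : FCtx → FCtx

def FCtx.plug : FCtx → Tm → Tm
  | .hole, t => t
  | .appR v _ F, t => Tm.app v (F.plug t)
  | .appL F u, t => Tm.app (F.plug t) u
  | .reset F, t => Tm.reset (F.plug t)

def FCtx.fv : FCtx → Finset ℕ
  | .hole => ∅
  | .appR v _ F => v.fv ∪ F.fv
  | .appL F u => F.fv ∪ u.fv
  | .reset F => F.fv

/-- The function `λx.⟨E[x]⟩` representing the captured delimited context `E`,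
where `x` is chosen fresh (in particular `x ∉ fv E`). -/
def contFun (E : ECtx) : Tm :=
  Tm.lam (fresh E.fv) (Tm.reset (E.plug (Tm.var (fresh E.fv))))

/-- Call-by-value reduction →_v of λ_S. -/
inductive Red : Tm → Tm → Prop
  | beta (F : FCtx) (x : ℕ) (t v : Tm) :
      IsValue v →
      Red (F.plug (Tm.app (Tm.lam x t) v)) (F.plug (t.subst x v))
  | capture (F : FCtx) (E : ECtx) (k : ℕ) (t : Tm) :
      Red (F.plug (Tm.reset (E.plug (Tm.shift k t))))
          (F.plug (Tm.reset (t.subst k (contFun E))))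
  | resetVal (F : FCtx) (v : Tm) :
      IsValue v →
      Red (F.plug (Tm.reset v)) (F.plug v)

/-- A stuck term: not a value and unable to reduce. -/
def Stuck (t : Tm) : Prop := ¬ IsValue t ∧ ∀ t', ¬ Red t t'

/-- Normal forms: values and stuck terms. -/
def NormalForm (t : Tm) : Prop := IsValue t ∨ Stuck t

/-- A control-stuck term has the form E[S k.t]. -/
def ControlStuck (t : Tm) : Prop :=
  ∃ (E : ECtx) (k : ℕ) (s : Tm), t = E.plug (Tm.shift k s)

/-- Evaluation: `t ⇓ t'` iff `t →_v* t'` and `t'` is a normal form. -/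
def Evals (t t' : Tm) : Prop := Relation.ReflTransGen Red t t' ∧ NormalForm t'

/-- `t` evaluates to some value. -/
def EvalsToValue (t : Tm) : Prop := ∃ v, Relation.ReflTransGen Red t v ∧ IsValue v

/-- `t` evaluates to some control-stuck term. -/
def EvalsToStuck (t : Tm) : Prop :=
  ∃ s, Relation.ReflTransGen Red t s ∧ ControlStuck s

/-- General contexts C ::= □ | λx.C | t C | C t | S k.C | ⟨C⟩. -/
inductive Ctx : Type
  | hole : Ctx
  | lam : ℕ → Ctx → Ctx
  | appL : Ctx → Tm → Ctx
  | appR : Tm → Ctx → Ctx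
  | shift : ℕ → Ctx → Ctx
  | reset : Ctx → Ctx

def Ctx.plug : Ctx → Tm → Tm
  | .hole, t => t
  | .lam x C, t => Tm.lam x (C.plug t)
  | .appL C u, t => Tm.app (C.plug t) u
  | .appR u C, t => Tm.app u (C.plug t)
  | .shift k C, t => Tm.shift k (C.plug t)
  | .reset C, t => Tm.reset (C.plug t)

def Ctx.fv : Ctx → Finset ℕ
  | .hole => ∅
  | .lam x C => C.fv \ {x}
  | .appL C u => C.fv ∪ u.fv
  | .appR u C => u.fv ∪ C.fv
  | .shift k C => C.fv \ {k}
  | .reset C => C.fv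

/-- Contextual equivalence ≈ for the relaxed semantics (on closed terms):
tests evaluation to values and evaluation to control-stuck terms in every
closed context. -/
def CtxEquiv (t0 t1 : Tm) : Prop :=
  ∀ C : Ctx, C.fv = ∅ →
    (EvalsToValue (C.plug t0) ↔ EvalsToValue (C.plug t1)) ∧
    (EvalsToStuck (C.plug t0) ↔ EvalsToStuck (C.plug t1))

/-- Contextual equivalence ≈_p for the original semantics: tests evaluation to
values of ⟨C[·]⟩ in every closed context C. -/
def CtxEquivP (t0 t1 : Tm) : Prop :=
  ∀ C : Ctx, C.fv = ∅ →
    (EvalsToValue (Tm.reset (C.plug t0)) ↔ EvalsToValue (Tm.reset (C.plug t1)))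

/-- Contextual equivalence ≈_E testing only with closed evaluation contexts. -/
def ECtxEquiv (t0 t1 : Tm) : Prop :=
  ∀ F : FCtx, F.fv = ∅ →
    (EvalsToValue (F.plug t0) ↔ EvalsToValue (F.plug t1)) ∧
    (EvalsToStuck (F.plug t0) ↔ EvalsToStuck (F.plug t1))

/-- Applicative simulation. -/
def IsAppSim (R : Tm → Tm → Prop) : Prop :=
  ∀ t0 t1, R t0 t1 →
    (∀ t0', Red t0 t0' →
      ∃ t1', Relation.ReflTransGen Red t1 t1' ∧ R t0' t1') ∧
    (∀ x t0', t0 = Tm.lam x t0' →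
      ∃ t1', Relation.ReflTransGen Red t1 (Tm.lam x t1') ∧
        ∀ v, IsValue v → Closed v → R (t0'.subst x v) (t1'.subst x v)) ∧
    (∀ (E0 : ECtx) (k : ℕ) (t0' : Tm), t0 = E0.plug (Tm.shift k t0') →
      ∃ (E1 : ECtx) (t1' : Tm),
        Relation.ReflTransGen Red t1 (E1.plug (Tm.shift k t1')) ∧
        ∀ E : ECtx, E.fv = ∅ →
          R (Tm.reset (t0'.subst k (contFun (E.comp E0))))
            (Tm.reset (t1'.subst k (contFun (E.comp E1)))))

/-- Applicative bisimulation. -/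
def IsAppBisim (R : Tm → Tm → Prop) : Prop :=
  IsAppSim R ∧ IsAppSim (fun a b => R b a)

/-- Applicative bisimilarity ≈_app: the largest applicative bisimulation. -/
def AppBisim (t0 t1 : Tm) : Prop := ∃ R, IsAppBisim R ∧ R t0 t1

/-- Simultaneous substitution (used only with closing substitutions mapping
variables to closed values, so no capture can occur). -/
def Tm.msubst : Tm → (ℕ → Tm) → Tm
  | .var x, σ => σ x
  | .lam x t, σ => Tm.lam x (t.msubst (Function.update σ x (Tm.var x)))
  | .app t u, σ => Tm.app (t.msubst σ) (u.msubst σ)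
  | .shift k t, σ => Tm.shift k (t.msubst (Function.update σ k (Tm.var k)))
  | .reset t, σ => Tm.reset (t.msubst σ)

/-- Open extension of a relation on closed terms: relate `t0σ` and `t1σ` for
every substitution σ mapping variables to closed values. -/
def OpenExt (R : Tm → Tm → Prop) (t0 t1 : Tm) : Prop :=
  ∀ σ : ℕ → Tm, (∀ x, IsValue (σ x) ∧ Closed (σ x)) →
    R (t0.msubst σ) (t1.msubst σ)

/-- ω := λx.x x. -/
def omegaTm : Tm := Tm.lam 0 (Tm.app (Tm.var 0) (Tm.var 0))

/-- Ω := ω ω, a diverging term. -/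
def OmegaTm : Tm := Tm.app omegaTm omegaTm

/-! The reset `⟨t⟩` is neither a value nor control-stuck, so the outer reset of `⟨⟨t⟩⟩` has no redex
of its own: the reductions of `⟨⟨t⟩⟩` are exactly those of `⟨t⟩` under one more reset. The two terms
therefore run in lockstep until `t` is a value `v`; then `⟨⟨v⟩⟩ → ⟨v⟩` makes the two sides equal. -/

theorem not_isValue_reset (t : Tm) : ¬ IsValue (.reset t) := nofun

theorem not_controlStuck_reset (t : Tm) : ¬ ControlStuck (.reset t) := by
  rintro ⟨_ | _ | _, k, s, h⟩ <;> cases h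

theorem Red.reset {t u : Tm} : Red t u → Red (.reset t) (.reset u)
  | .beta F x s v hv => .beta (.reset F) x s v hv
  | .capture F E k s => .capture (.reset F) E k s
  | .resetVal F v hv => .resetVal (.reset F) v hv

theorem red_reset_iff {t u : Tm} :
    Red (.reset t) u ↔
      (∃ t', Red t t' ∧ u = .reset t') ∨
      (∃ E k s, t = ECtx.plug E (.shift k s) ∧ u = .reset (s.subst k (contFun E))) ∨
      (IsValue t ∧ u = t) := by
  constructor
  · generalize hr : Tm.reset t = r
    rintro (⟨F, x, s, v, hv⟩ | ⟨F, E, k, s⟩ | ⟨F, v, hv⟩) <;> cases F <;> cases hr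
    case mp.beta.reset.refl F => exact .inl ⟨_, .beta F x s v hv, rfl⟩
    case mp.capture.hole.refl => exact .inr (.inl ⟨E, k, s, rfl, rfl⟩)
    case mp.capture.reset.refl F => exact .inl ⟨_, .capture F E k s, rfl⟩
    case mp.resetVal.hole.refl => exact .inr (.inr ⟨hv, rfl⟩)
    case mp.resetVal.reset.refl F => exact .inl ⟨_, .resetVal F v hv, rfl⟩
  · rintro (⟨t', h, rfl⟩ | ⟨E, k, s, rfl, rfl⟩ | ⟨hv, rfl⟩)
    · exact h.reset
    · exact .capture .hole E k s
    · exact .resetVal .hole u hv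

theorem Red.eq_reset_or_isValue {t u : Tm} (h : Red (.reset t) u) :
    (∃ t', u = .reset t') ∨ (IsValue t ∧ u = t) := by
  rcases red_reset_iff.1 h with ⟨t', -, hu⟩ | ⟨_, _, _, -, hu⟩ | hval
  · exact .inl ⟨t', hu⟩
  · exact .inl ⟨_, hu⟩
  · exact .inr hval

theorem red_reset_iff_of_not_isValue_of_not_controlStuck {t u : Tm} (hval : ¬ IsValue t)
    (hstuck : ¬ ControlStuck t) :
    Red (.reset t) u ↔ ∃ t', Red t t' ∧ u = .reset t' := by
  refine red_reset_iff.trans (or_iff_left ?_)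
  rintro (⟨E, k, s, h, -⟩ | ⟨h, -⟩)
  · exact hstuck ⟨E, k, s, h⟩
  · exact hval h

theorem red_reset_reset_iff {t u : Tm} :
    Red (.reset (.reset t)) u ↔ ∃ t', Red (.reset t) t' ∧ u = .reset t' :=
  red_reset_iff_of_not_isValue_of_not_controlStuck (not_isValue_reset t) (not_controlStuck_reset t)

/-- Progress of `R` to `S`: clause (i) of applicative simulation, with separate relations before and
after the step. -/
def RedProgress (R S : Tm → Tm → Prop) : Prop :=
  ∀ ⦃a b⦄, R a b → ∀ a', Red a a' → ∃ b', Relation.ReflTransGen Red b b' ∧ S a' b'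

/-- The reflexive closure in `hred` lets a pair be discarded as soon as its two sides meet. -/
theorem isAppSim_reflGen {R : Tm → Tm → Prop} (hval : ∀ ⦃a b⦄, R a b → ¬ IsValue a)
    (hstuck : ∀ ⦃a b⦄, R a b → ¬ ControlStuck a) (hred : RedProgress R (Relation.ReflGen R)) :
    IsAppSim (Relation.ReflGen R) := by
  rintro a b (_ | hab)
  · refine ⟨fun a' h => ⟨a', .single h, .refl⟩, ?_, ?_⟩
    · rintro x s rfl
      exact ⟨s, .refl, fun _ _ _ => .refl⟩
    · rintro E k s rfl
      exact ⟨E, s, .refl, fun _ _ => .refl⟩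
  · refine ⟨hred hab, ?_, fun E k s h => (hstuck hab ⟨E, k, s, h⟩).elim⟩
    rintro x s rfl
    exact (hval hab (.lam x s)).elim

theorem reflGen_swap {α : Type*} (R : α → α → Prop) :
    Relation.ReflGen (Function.swap R) = Function.swap (Relation.ReflGen R) := by
  ext a b
  simp only [Function.swap, Relation.reflGen_iff, eq_comm]

/-- The pairs `(⟨⟨t⟩⟩, ⟨t⟩)`; their reflexive closure is the candidate bisimulation. -/
inductive DoubleReset : Tm → Tm → Prop
  | intro (t : Tm) : DoubleReset (.reset (.reset t)) (.reset t)

theorem redProgress_doubleReset :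
    RedProgress DoubleReset (Relation.ReflGen DoubleReset) := by
  rintro _ _ ⟨t⟩ a' ha
  obtain ⟨u, hu, rfl⟩ := red_reset_reset_iff.1 ha
  rcases hu.eq_reset_or_isValue with ⟨t', rfl⟩ | ⟨-, rfl⟩
  · exact ⟨.reset t', .single hu, .single (.intro t')⟩
  · exact ⟨.reset u, .refl, .refl⟩

theorem redProgress_swap_doubleReset :
    RedProgress (Function.swap DoubleReset)
      (Relation.ReflGen (Function.swap DoubleReset)) := by
  rintro _ _ ⟨t⟩ u hu
  have lifted : Red (.reset (.reset t)) (.reset u) := hu.reset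
  rcases hu.eq_reset_or_isValue with ⟨t', rfl⟩ | ⟨-, rfl⟩
  · exact ⟨.reset (.reset t'), .single lifted, .single (.intro t')⟩
  · exact ⟨u, .head lifted (.single hu), .refl⟩

theorem isAppBisim_reflGen_doubleReset : IsAppBisim (Relation.ReflGen DoubleReset) := by
  constructor
  · refine isAppSim_reflGen ?_ ?_ redProgress_doubleReset
    · rintro _ _ ⟨t⟩; exact not_isValue_reset _
    · rintro _ _ ⟨t⟩; exact not_controlStuck_reset _
  · change IsAppSim (Function.swap (Relation.ReflGen DoubleReset))
    rw [← reflGen_swap]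
    refine isAppSim_reflGen ?_ ?_ redProgress_swap_doubleReset
    · rintro _ _ ⟨t⟩; exact not_isValue_reset _
    · rintro _ _ ⟨t⟩; exact not_controlStuck_reset _

theorem double_reset_appBisim_general (t : Tm) :
    AppBisim (.reset (.reset t)) (.reset t) :=
  ⟨_, isAppBisim_reflGen_doubleReset, .single (.intro t)⟩

/-- A doubled reset is applicatively bisimilar to a single
reset, for every closed term. -/
theorem double_reset_appBisim (t : Tm) (h : Closed t) :
    AppBisim (Tm.reset (Tm.reset t)) (Tm.reset t) :=
  double_reset_appBisim_general t

end LambdaS
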